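/- For N = 2, the matrix-valued function ϑ(w,z) = (1/2i)cos((2/π)z)σ₁ + (w/(πi))σ₂ + (1/2i)sin((2/π)z)σ₃, where σ₁, σ₂, σ₃ are the Pauli matrices, satisfies the su(2) chiral field equation ∂²_w ϑ + ∂²_z ϑ + [∂_w ϑ, ∂_z ϑ] = 0. -/

import Mathlib

open Matrix

/-- The Pauli matrices. -/
noncomputable def pauli1 : Matrix (Fin 2) (Fin 2) ℂ := !![0, 1; 1, 0]
noncomputable def pauli2 : Matrix (Fin 2) (Fin 2) ℂ := !![0, -Complex.I; Complex.I, 0]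
noncomputable def pauli3 : Matrix (Fin 2) (Fin 2) ℂ := !![1, 0; 0, -1]

/-- `ϑ(w,z) = (1/2i)cos((2/π)z)σ₁ + (w/(πi))σ₂ + (1/2i)sin((2/π)z)σ₃`. -/
noncomputable def chiralSolN2 (w z : ℝ) : Matrix (Fin 2) (Fin 2) ℂ :=
  ((1 : ℂ) / (2 * Complex.I) * Complex.cos (((2 / Real.pi) * z : ℝ) : ℂ)) • pauli1 +
    ((w : ℂ) / (Real.pi * Complex.I)) • pauli2 +
    ((1 : ℂ) / (2 * Complex.I) * Complex.sin (((2 / Real.pi) * z : ℝ) : ℂ)) • pauli3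

/-! The field is a helix: it rotates in the plane of `σ₁` and `σ₃` with angular speed `k = 2 / π` in
`z`, and translates along `Y`, a multiple of `σ₂`, in `w`. The bracket `⁅Y, ·⁆` acts on that plane
as `k` times a quarter turn, so it sends the velocity `∂_z ϑ` to `k ^ 2` times the rotating part
of `ϑ`. The second derivative `∂²_z ϑ` is `-k ^ 2` times the same vector, and `∂²_w ϑ = 0`. -/

attribute [local instance] LieRing.ofAssociativeRing

section Helix

variable {E : Type*} [AddCommGroup E] [Module ℝ E]

/-- The ellipse with conjugate radii `X` and `Z`, parametrized by the angle `θ`. -/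
noncomputable def ellipsePath (X Z : E) (θ : ℝ) : E :=
  Real.cos θ • X + Real.sin θ • Z

/-- The helix that turns along `ellipsePath X Z` with angular speed `k` in the variable `z` and
translates along the axis `Y` in the variable `w`. -/
noncomputable def helix (k : ℝ) (X Y Z : E) (w z : ℝ) : E :=
  ellipsePath X Z (k * z) + w • Y

theorem ellipsePath_neg_neg (X Z : E) (θ : ℝ) :
    ellipsePath (-X) (-Z) θ = -ellipsePath X Z θ := by
  simp only [ellipsePath, smul_neg, neg_add]

theorem lie_ellipsePath_quarterTurn {L : Type*} [LieRing L] [LieAlgebra ℝ L] {k : ℝ} {X Y Z : L}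
    (hYX : ⁅Y, X⁆ = -(k • Z)) (hYZ : ⁅Y, Z⁆ = k • X) (θ : ℝ) :
    ⁅Y, ellipsePath Z (-X) θ⁆ = k • ellipsePath X Z θ := by
  simp only [ellipsePath, lie_add, lie_smul, lie_neg, hYX, hYZ, neg_neg, smul_add, smul_comm k]

end Helix

section HelixDeriv

variable {E : Type*} [NormedAddCommGroup E] [NormedSpace ℝ E]

theorem hasDerivAt_ellipsePath (X Z : E) (θ : ℝ) :
    HasDerivAt (ellipsePath X Z) (ellipsePath Z (-X) θ) θ := by
  refine (((Real.hasDerivAt_cos θ).smul_const X).add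
    ((Real.hasDerivAt_sin θ).smul_const Z)).congr_deriv ?_
  simp only [ellipsePath]
  module

theorem hasDerivAt_ellipsePath_const_mul (k : ℝ) (X Z : E) (t : ℝ) :
    HasDerivAt (fun s => ellipsePath X Z (k * s)) (k • ellipsePath Z (-X) (k * t)) t :=
  (hasDerivAt_ellipsePath X Z (k * t)).scomp t (hasDerivAt_const_mul k)

theorem hasDerivAt_helix_axial (k : ℝ) (X Y Z : E) (w z : ℝ) :
    HasDerivAt (fun w' => helix k X Y Z w' z) Y w := by
  refine (((hasDerivAt_id w).smul_const Y).const_add (ellipsePath X Z (k * z))).congr_deriv ?_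
  exact one_smul ℝ Y

theorem hasDerivAt_helix_angular (k : ℝ) (X Y Z : E) (w z : ℝ) :
    HasDerivAt (helix k X Y Z w) (k • ellipsePath Z (-X) (k * z)) z :=
  (hasDerivAt_ellipsePath_const_mul k X Z z).add_const (w • Y)

end HelixDeriv

section EntryDeriv

variable {𝕜 m n E : Type*} [NontriviallyNormedField 𝕜] [NormedAddCommGroup E] [NormedSpace 𝕜 E]

/-- The entrywise derivative of a matrix-valued function. It agrees with `deriv` where the function
is differentiable, and takes the junk value `0` in each entry that is not. -/
noncomputable def entryDeriv (F : 𝕜 → Matrix m n E) (t : 𝕜) : Matrix m n E :=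
  Matrix.of fun i j => deriv (fun s => F s i j) t

theorem entryDeriv_eq_of_hasDerivAt [Finite m] [Finite n] {F : 𝕜 → Matrix m n E}
    {F' : Matrix m n E} {t : 𝕜} (hF : HasDerivAt F F' t) : entryDeriv F t = F' := by
  cases nonempty_fintype n
  ext i j
  exact (hasDerivAt_pi.1 (hasDerivAt_pi.1 hF i) j).deriv

end EntryDeriv

section ChiralField

variable {n R : Type*} [Fintype n] [NormedRing R] [NormedAlgebra ℝ R]

/-- The chiral field equation `∂²_w ϑ + ∂²_z ϑ + [∂_w ϑ, ∂_z ϑ] = 0` for a matrix-valued field,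
with all derivatives taken entrywise. -/
def IsChiralField (ϑ : ℝ → ℝ → Matrix n n R) : Prop :=
  ∀ w z, entryDeriv (entryDeriv fun w' => ϑ w' z) w + entryDeriv (entryDeriv (ϑ w)) z +
    ⁅entryDeriv (fun w' => ϑ w' z) w, entryDeriv (ϑ w) z⁆ = 0

open scoped Matrix.Norms.Elementwise in
theorem isChiralField_helix {k : ℝ} {X Y Z : Matrix n n R}
    (hYX : ⁅Y, X⁆ = -(k • Z)) (hYZ : ⁅Y, Z⁆ = k • X) : IsChiralField (helix k X Y Z) := by
  classical
  intro w z
  have h_w : entryDeriv (fun w' => helix k X Y Z w' z) = fun _ => Y :=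
    funext fun w' => entryDeriv_eq_of_hasDerivAt (hasDerivAt_helix_axial k X Y Z w' z)
  have h_ww : entryDeriv (fun _ : ℝ => Y) w = 0 :=
    entryDeriv_eq_of_hasDerivAt (hasDerivAt_const w Y)
  have h_z : entryDeriv (helix k X Y Z w) = fun z' => k • ellipsePath Z (-X) (k * z') :=
    funext fun z' => entryDeriv_eq_of_hasDerivAt (hasDerivAt_helix_angular k X Y Z w z')
  have h_zz : entryDeriv (fun z' => k • ellipsePath Z (-X) (k * z')) z =
      k • k • ellipsePath (-X) (-Z) (k * z) :=
    entryDeriv_eq_of_hasDerivAt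
      ((hasDerivAt_ellipsePath_const_mul k Z (-X) z).const_smul k)
  rw [h_w, h_ww, h_z, h_zz]
  beta_reduce
  rw [lie_smul, lie_ellipsePath_quarterTurn hYX hYZ, ellipsePath_neg_neg,
    smul_neg, smul_neg, zero_add, neg_add_cancel]

end ChiralField

theorem lie_pauli2_pauli1 : ⁅pauli2, pauli1⁆ = -((2 * Complex.I) • pauli3) := by
  ext i j
  fin_cases i <;> fin_cases j <;>
    simp [Ring.lie_def, pauli1, pauli2, pauli3, two_mul, sub_eq_add_neg]

theorem lie_pauli2_pauli3 : ⁅pauli2, pauli3⁆ = (2 * Complex.I) • pauli1 := by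
  ext i j
  fin_cases i <;> fin_cases j <;> simp [Ring.lie_def, pauli1, pauli2, pauli3, two_mul]

theorem chiralSolN2_eq_helix :
    chiralSolN2 = helix (2 / Real.pi) ((1 / (2 * Complex.I)) • pauli1)
      ((1 / (Real.pi * Complex.I)) • pauli2) ((1 / (2 * Complex.I)) • pauli3) := by
  funext w z
  simp only [chiralSolN2, helix, ellipsePath, ← Complex.coe_smul, Complex.ofReal_cos,
    Complex.ofReal_sin]
  module

theorem isChiralField_chiralSolN2 : IsChiralField chiralSolN2 := by
  have h_lie_X : ⁅(1 / (Real.pi * Complex.I)) • pauli2, (1 / (2 * Complex.I)) • pauli1⁆ =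
      -((2 / Real.pi) • (1 / (2 * Complex.I)) • pauli3) := by
    rw [smul_lie, lie_smul, lie_pauli2_pauli1, ← Complex.coe_smul]
    push_cast
    match_scalars
    field_simp
  have h_lie_Z : ⁅(1 / (Real.pi * Complex.I)) • pauli2, (1 / (2 * Complex.I)) • pauli3⁆ =
      (2 / Real.pi) • (1 / (2 * Complex.I)) • pauli1 := by
    rw [smul_lie, lie_smul, lie_pauli2_pauli3, ← Complex.coe_smul]
    push_cast
    match_scalars
    field_simp
  rw [chiralSolN2_eq_helix]
  exact isChiralField_helix h_lie_X h_lie_Z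

/-- Entrywise second partial derivatives; `ϑ` satisfies the `su(2)` chiral field
equation `∂²_w ϑ + ∂²_z ϑ + [∂_w ϑ, ∂_z ϑ] = 0`. -/
theorem chiralSolN2_satisfies_chiral (w z : ℝ) :
    (Matrix.of fun i j => deriv (fun a => deriv (fun b => chiralSolN2 b z i j) a) w) +
      (Matrix.of fun i j => deriv (fun a => deriv (fun b => chiralSolN2 w b i j) a) z) +
      ((Matrix.of fun i j => deriv (fun b => chiralSolN2 b z i j) w) *
          (Matrix.of fun i j => deriv (fun b => chiralSolN2 w b i j) z) -
        (Matrix.of fun i j => deriv (fun b => chiralSolN2 w b i j) z) *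
          (Matrix.of fun i j => deriv (fun b => chiralSolN2 b z i j) w)) = 0 :=
  isChiralField_chiralSolN2 w z
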